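/- Let A and B be positive semidefinite n×n complex matrices. Then det((A−B)²) ≤ det((A+B)²); equivalently, (det(A−B))² ≤ (det(A+B))². -/

import Mathlib

/-!
If `S = A + B` is singular, a null vector of `S` is a null vector of both `A` and `B` (their
quadratic forms are nonnegative and sum to zero), so `A - B` is singular as well. Otherwise
`S = Cᴴ C` with `C` invertible, and congruence by `C⁻¹` turns `S` into the identity and `A - B`
into a Hermitian matrix `K` with `-1 ≤ K ≤ 1`. The eigenvalues of `K` lie in `[-1, 1]`, hence
`|det K| ≤ 1`, while `det (A - B) = det K * det S`.
-/

open Matrix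
open scoped ComplexOrder

/-- A Hermitian matrix with `-1 ≤ K ≤ 1` in the Loewner order has real determinant in `[-1, 1]`. -/
lemma exists_abs_le_one_det_eq {n : ℕ} (K : Matrix (Fin n) (Fin n) ℂ) (hK : K.IsHermitian)
    (h1 : (1 - K).PosSemidef) (h2 : (1 + K).PosSemidef) :
    ∃ d : ℝ, |d| ≤ 1 ∧ K.det = (d : ℂ) := by
  refine ⟨∏ i, hK.eigenvalues i, ?_, ?_⟩
  · rw [Finset.abs_prod]
    refine Finset.prod_le_one (fun i _ => abs_nonneg _) (fun i _ => ?_)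
    have e := hK.eigenvalues_eq i
    set v : Fin n → ℂ := ⇑(hK.eigenvectorBasis i)
    have hv : star v ⬝ᵥ v = 1 := by
      have := inner_self_eq_norm_sq_to_K (𝕜 := ℂ) (hK.eigenvectorBasis i)
      rw [EuclideanSpace.inner_eq_star_dotProduct, hK.eigenvectorBasis.orthonormal.1 i,
        dotProduct_comm] at this
      simpa using this
    have a1 := (Complex.le_def.1 (h1.dotProduct_mulVec_nonneg v)).1
    have a2 := (Complex.le_def.1 (h2.dotProduct_mulVec_nonneg v)).1
    rw [sub_mulVec, dotProduct_sub, one_mulVec, hv] at a1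
    rw [add_mulVec, dotProduct_add, one_mulVec, hv] at a2
    simp at a1 a2 e
    rw [e, abs_le]
    constructor <;> linarith
  · rw [hK.det_eq_prod_eigenvalues]
    simp

open scoped MatrixOrder in
lemma det_sub_sq_le {n : ℕ} (A B : Matrix (Fin n) (Fin n) ℂ)
    (hA : A.PosSemidef) (hB : B.PosSemidef) :
    ((A - B).det) ^ 2 ≤ ((A + B).det) ^ 2 := by
  have hS := hA.add hB
  by_cases h0 : (A + B).det = 0
  · obtain ⟨v, hv, hSv⟩ := exists_mulVec_eq_zero_iff.2 h0
    have hsum : star v ⬝ᵥ A *ᵥ v + star v ⬝ᵥ B *ᵥ v = 0 := by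
      rw [← dotProduct_add, ← add_mulVec, hSv, dotProduct_zero]
    obtain ⟨ha, hb⟩ := (add_eq_zero_iff_of_nonneg (hA.dotProduct_mulVec_nonneg v)
      (hB.dotProduct_mulVec_nonneg v)).1 hsum
    have hD : (A - B).det = 0 := exists_mulVec_eq_zero_iff.1 ⟨v, hv, by
      rw [sub_mulVec, (hA.dotProduct_mulVec_zero_iff v).1 ha,
        (hB.dotProduct_mulVec_zero_iff v).1 hb, sub_zero]⟩
    rw [hD, h0]
  · obtain ⟨C, hC⟩ : ∃ C : Matrix (Fin n) (Fin n) ℂ, A + B = Cᴴ * C :=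
      CStarAlgebra.nonneg_iff_eq_star_mul_self.mp hS.nonneg
    have hCu : IsUnit C.det := by
      rw [isUnit_iff_ne_zero]
      rintro h
      exact h0 (by rw [hC, det_mul, h, mul_zero])
    have hT : (C⁻¹)ᴴ * (A + B) * C⁻¹ = 1 := by
      rw [hC, ← mul_assoc, ← conjTranspose_mul, mul_nonsing_inv _ hCu, conjTranspose_one, one_mul,
        mul_nonsing_inv _ hCu]
    generalize C⁻¹ = T at hT
    obtain ⟨d, hd, hdet⟩ := exists_abs_le_one_det_eq (Tᴴ * (A - B) * T)
      (isHermitian_conjTranspose_mul_mul T (hA.1.sub hB.1))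
      (by
        have : 1 - Tᴴ * (A - B) * T = Tᴴ * (B + B) * T := by rw [← hT]; noncomm_ring
        rw [this]
        exact (hB.add hB).conjTranspose_mul_mul_same T)
      (by
        have : 1 + Tᴴ * (A - B) * T = Tᴴ * (A + A) * T := by rw [← hT]; noncomm_ring
        rw [this]
        exact (hA.add hA).conjTranspose_mul_mul_same T)
    have hTd : Tᴴ.det * (A + B).det * T.det = 1 := by
      rw [← det_mul, ← det_mul, hT, det_one]
    rw [det_mul, det_mul] at hdet
    have key : (A - B).det = d * (A + B).det := by
      rw [← hdet]; linear_combination (-(A - B).det) * hTd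
    have hs : 0 ≤ (A + B).det ^ 2 := pow_nonneg hS.det_nonneg 2
    have hd2 : ((d ^ 2 : ℝ) : ℂ) ≤ 1 := by
      exact_mod_cast (sq_le_one_iff_abs_le_one d).2 hd
    rw [key, mul_pow]
    push_cast at hd2
    exact mul_le_of_le_one_left hs hd2

/-- Let `A` and `B` be positive semidefinite `n × n` complex matrices. Then
`det((A - B)^2) ≤ det((A + B)^2)`; equivalently `(det (A - B))^2 ≤ (det (A + B))^2`. -/
theorem det_sq_sub_le_det_sq_add {n : ℕ} (A B : Matrix (Fin n) (Fin n) ℂ)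
    (hA : A.PosSemidef) (hB : B.PosSemidef) :
    ((A - B) ^ 2).det ≤ ((A + B) ^ 2).det ∧ ((A - B).det) ^ 2 ≤ ((A + B).det) ^ 2 := by
  rw [det_pow, det_pow]
  exact ⟨det_sub_sq_le A B hA hB, det_sub_sq_le A B hA hB⟩
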